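/- arXiv:2105.09565 — 2 statements merged into one kernel-verified Lean document; each statement's English description precedes it below -/
import Mathlib

section
/- Let f be a Steinhaus random multiplicative function, let x ≥ 4, and set 𝓕(√x) := σ({f(p) : p prime, p ≤ √x}), M_f(x) := ∑_{n ≤ x, P(n) > √x} f(n), and V(x) := ∑_{√x < p ≤ x, p prime} |∑_{m ≤ x/p} f(m)|². Then for any λ > 0, almost surely the conditional probabilities satisfy ℙ(|Re(M_f(x))| ≥ λ | 𝓕(√x)) ≤ 2·exp(−λ²/(2·V(x))) and ℙ(|Im(M_f(x))| ≥ λ | 𝓕(√x)) ≤ 2·exp(−λ²/(2·V(x))), where on the event {V(x) = 0} the left-hand sides vanish. -/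
open MeasureTheory ProbabilityTheory Real

noncomputable section

/-- The largest prime factor of `n`, with `P 1 = 1` (and `P 0 = 1`). -/
def Pfac (n : ℕ) : ℕ := if n ≤ 1 then 1 else n.primeFactors.sup id

/-- A Steinhaus random multiplicative function. -/
structure IsSteinhausRMF {Ω : Type*} [MeasurableSpace Ω] (μ : Measure Ω)
    (f : Ω → ℕ → ℂ) : Prop where
  meas : ∀ n : ℕ, Measurable fun ω => f ω n
  indep : iIndepFun (m := fun _ : Nat.Primes => (inferInstance : MeasurableSpace ℂ))
    (fun (p : Nat.Primes) (ω : Ω) => f ω (p : ℕ)) μ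
  unif : ∀ p : ℕ, p.Prime →
    Measure.map (fun ω => f ω p) μ =
      Measure.map (fun θ : ℝ => Complex.exp (2 * π * θ * Complex.I))
        (volume.restrict (Set.Ioc (0 : ℝ) 1))
  map_one : ∀ ω : Ω, f ω 1 = 1
  map_mul : ∀ (ω : Ω) (m n : ℕ), 1 ≤ m → 1 ≤ n → f ω (m * n) = f ω m * f ω n

/-- The σ-algebra `𝓕(√x)` generated by `{f(p) : p prime, p ≤ √x}`. -/
def sigmaAlgSqrt {Ω : Type*} (f : Ω → ℕ → ℂ) (x : ℝ) : MeasurableSpace Ω :=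
  ⨆ p ∈ {p : ℕ | p.Prime ∧ (p : ℝ) ≤ Real.sqrt x},
    MeasurableSpace.comap (fun ω => f ω p) (inferInstance : MeasurableSpace ℂ)

/-- `M_f(x) := ∑_{n ≤ x, P(n) > √x} f(n)`. -/
def Mst {Ω : Type*} (f : Ω → ℕ → ℂ) (ω : Ω) (x : ℝ) : ℂ :=
  ∑ n ∈ (Finset.Icc 1 ⌊x⌋₊).filter (fun n : ℕ => Real.sqrt x < (Pfac n : ℝ)), f ω n

/-- `V(x) := ∑_{√x < p ≤ x} |∑_{m ≤ x/p} f(m)|²`. -/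
def Vst {Ω : Type*} (f : Ω → ℕ → ℂ) (ω : Ω) (x : ℝ) : ℝ :=
  ∑ p ∈ (Finset.Icc 1 ⌊x⌋₊).filter (fun p : ℕ => Nat.Prime p ∧ Real.sqrt x < (p : ℝ)),
    ‖∑ m ∈ Finset.Icc 1 ⌊x / (p : ℝ)⌋₊, f ω m‖ ^ 2

/-! Every `n ≤ x` with `P(n) > √x` is uniquely `p m` with `√x < p` prime and `m ≤ x / p < √x`, so
`M_f(x) = ∑_p f(p) ∑_{m ≤ x / p} f(m)`. The inner sums are `𝓕(√x)`-measurable, while the `f(p)`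
with `p > √x` are independent of `𝓕(√x)`. Conditionally on `𝓕(√x)` the inner sums may therefore
be frozen, and Hoeffding's inequality applies to a weighted sum of independent centred variables in
the unit disc. The real and imaginary parts are both of the form `Re (u M_f(x))` with `|u| = 1`.
-/

section Probability

variable {Ω β γ ι : Type*} [MeasurableSpace Ω] {μ : Measure Ω}

lemma condExp_comp_prodMk_of_indepFun {E : Type*} [NormedAddCommGroup E] [NormedSpace ℝ E]
    [CompleteSpace E] [IsProbabilityMeasure μ] [mβ : MeasurableSpace β] [MeasurableSpace γ]
    {X : Ω → β} {Y : Ω → γ} {F : β × γ → E} (hX : Measurable X) (hY : Measurable Y)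
    (hXY : IndepFun X Y μ) (hF : StronglyMeasurable F)
    (hFint : Integrable (fun ω => F (X ω, Y ω)) μ) :
    μ[fun ω => F (X ω, Y ω) | mβ.comap X] =ᵐ[μ] fun ω => ∫ ω', F (X ω, Y ω') ∂μ := by
  have hlaw : μ.map (fun ω => (X ω, Y ω)) = (μ.map X).prod (μ.map Y) :=
    (indepFun_iff_map_prod_eq_prod_map_map hX.aemeasurable hY.aemeasurable).1 hXY
  have := Measure.isProbabilityMeasure_map (μ := μ) hX.aemeasurable
  have := Measure.isProbabilityMeasure_map (μ := μ) hY.aemeasurable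
  have hFprod : Integrable F ((μ.map X).prod (μ.map Y)) := by
    rw [← hlaw]
    exact (integrable_map_measure hF.aestronglyMeasurable (hX.prodMk hY).aemeasurable).2 hFint
  have hfrozen : ∀ b, ∫ ω', F (b, Y ω') ∂μ = ∫ y, F (b, y) ∂μ.map Y := fun b =>
    (integral_map hY.aemeasurable
      (hF.comp_measurable measurable_prodMk_left).aestronglyMeasurable).symm
  have hmeas : StronglyMeasurable fun b => ∫ y, F (b, y) ∂μ.map Y := hF.integral_prod_right'
  have hint : Integrable (fun ω => ∫ y, F (X ω, y) ∂μ.map Y) μ :=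
    hFprod.integral_prod_left.comp_measurable hX
  simp only [hfrozen]
  refine (ae_eq_condExp_of_forall_setIntegral_eq hX.comap_le hFint
    (fun _ _ _ => hint.integrableOn) ?_
    (hmeas.comp_measurable (comap_measurable X)).aestronglyMeasurable).symm
  rintro _ ⟨B, hB, rfl⟩ -
  calc ∫ ω in X ⁻¹' B, ∫ y, F (X ω, y) ∂μ.map Y ∂μ
      = ∫ b in B, ∫ y, F (b, y) ∂μ.map Y ∂μ.map X :=
        (setIntegral_map hB hmeas.aestronglyMeasurable hX.aemeasurable).symm
    _ = ∫ z in B ×ˢ Set.univ, F z ∂(μ.map X).prod (μ.map Y) := by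
        rw [setIntegral_prod F hFprod.integrableOn, Measure.restrict_univ]
    _ = ∫ ω in X ⁻¹' B, F (X ω, Y ω) ∂μ := by
        rw [← hlaw, setIntegral_map (hB.prod .univ) hF.aestronglyMeasurable
          (hX.prodMk hY).aemeasurable]
        simp only [Set.mk_preimage_prod, Set.preimage_univ, Set.inter_univ]

lemma condExp_indicator_of_indepFun [IsProbabilityMeasure μ] [mβ : MeasurableSpace β]
    [MeasurableSpace γ] {X : Ω → β} {Y : Ω → γ} (hX : Measurable X) (hY : Measurable Y)
    (hXY : IndepFun X Y μ) {A : Set (β × γ)} (hA : MeasurableSet A) :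
    μ[{ω | (X ω, Y ω) ∈ A}.indicator (fun _ => (1 : ℝ)) | mβ.comap X] =ᵐ[μ]
      fun ω => μ.real {ω' | (X ω, Y ω') ∈ A} := by
  have hint : Integrable ({ω | (X ω, Y ω) ∈ A}.indicator fun _ => (1 : ℝ)) μ :=
    (integrable_const 1).indicator (hX.prodMk hY hA)
  filter_upwards [condExp_comp_prodMk_of_indepFun hX hY hXY
    (stronglyMeasurable_const.indicator hA) hint] with ω hω
  exact hω.trans (integral_indicator_one (measurable_const.prodMk hY hA))

lemma measureReal_abs_ge_le_of_hasSubgaussianMGF {X : Ω → ℝ} {c : NNReal}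
    (h : HasSubgaussianMGF X c μ) {ε : ℝ} (hε : 0 ≤ ε) :
    μ.real {ω | ε ≤ |X ω|} ≤ 2 * exp (-ε ^ 2 / (2 * c)) := by
  have hunion : {ω | ε ≤ |X ω|} = {ω | ε ≤ X ω} ∪ {ω | ε ≤ (-X) ω} := by
    ext ω
    exact le_abs (a := ε) (b := X ω)
  calc μ.real {ω | ε ≤ |X ω|}
      ≤ μ.real {ω | ε ≤ X ω} + μ.real {ω | ε ≤ (-X) ω} := hunion ▸ measureReal_union_le _ _
    _ ≤ exp (-ε ^ 2 / (2 * c)) + exp (-ε ^ 2 / (2 * c)) :=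
        add_le_add (h.measure_ge_le hε) (h.neg.measure_ge_le hε)
    _ = 2 * exp (-ε ^ 2 / (2 * c)) := (two_mul _).symm

lemma hasSubgaussianMGF_re_const_mul [IsProbabilityMeasure μ] {Y : Ω → ℂ}
    (hY : AEMeasurable Y μ) (hbound : ∀ᵐ ω ∂μ, ‖Y ω‖ ≤ 1) (hmean : ∫ ω, Y ω ∂μ = 0) (c : ℂ) :
    HasSubgaussianMGF (fun ω => (c * Y ω).re) (‖c‖₊ ^ 2) μ := by
  have hmem : ∀ᵐ ω ∂μ, (c * Y ω).re ∈ Set.Icc (-‖c‖) ‖c‖ := by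
    filter_upwards [hbound] with ω hω
    refine abs_le.1 ((Complex.abs_re_le_norm _).trans ?_)
    simpa only [norm_mul] using mul_le_of_le_one_right (norm_nonneg c) hω
  have hint : Integrable Y μ := .of_bound hY.aestronglyMeasurable 1 hbound
  have hre : ∫ ω, (c * Y ω).re ∂μ = 0 := by
    have := integral_re (𝕜 := ℂ) (hint.const_mul c)
    rwa [integral_const_mul, hmean, mul_zero] at this
  convert! hasSubgaussianMGF_of_mem_Icc_of_integral_eq_zero (by fun_prop) hmem hre using 2
  have hwidth : ‖c‖ - -‖c‖ = 2 * ‖c‖ := by ring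
  ext
  simp [hwidth]

variable [Fintype ι] {Y : ι → Ω → ℂ}

lemma measureReal_abs_re_sum_mul_ge_le (hY : ∀ i, AEMeasurable (Y i) μ) (hindep : iIndepFun Y μ)
    (hbound : ∀ i, ∀ᵐ ω ∂μ, ‖Y i ω‖ ≤ 1) (hmean : ∀ i, ∫ ω, Y i ω ∂μ = 0) (c : ι → ℂ)
    {ε : ℝ} (hε : 0 ≤ ε) :
    μ.real {ω | ε ≤ |(∑ i, c i * Y i ω).re|} ≤ 2 * exp (-ε ^ 2 / (2 * ∑ i, ‖c i‖ ^ 2)) := by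
  have := hindep.isProbabilityMeasure
  have hindep' : iIndepFun (fun i ω => (c i * Y i ω).re) μ :=
    hindep.comp (fun i z => (c i * z).re) fun i => by fun_prop
  have hsum : HasSubgaussianMGF (fun ω => ∑ i, (c i * Y i ω).re) (∑ i, ‖c i‖₊ ^ 2) μ :=
    .sum_of_iIndepFun hindep' fun i _ =>
      hasSubgaussianMGF_re_const_mul (hY i) (hbound i) (hmean i) (c i)
  simpa using measureReal_abs_ge_le_of_hasSubgaussianMGF hsum hε

theorem condExp_abs_re_sum_mul_ge_le [mβ : MeasurableSpace β] {X : Ω → β} {c : ι → β → ℂ}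
    (hX : Measurable X) (hc : ∀ i, Measurable (c i)) (hY : ∀ i, Measurable (Y i))
    (hXY : IndepFun X (fun ω i => Y i ω) μ) (hindep : iIndepFun Y μ)
    (hbound : ∀ i, ∀ᵐ ω ∂μ, ‖Y i ω‖ ≤ 1) (hmean : ∀ i, ∫ ω, Y i ω ∂μ = 0)
    {ε : ℝ} (hε : 0 < ε) :
    ∀ᵐ ω ∂μ,
      (μ[{ω' | ε ≤ |(∑ i, c i (X ω') * Y i ω').re|}.indicator (fun _ => (1 : ℝ))
          | mβ.comap X]) ω ≤ 2 * exp (-ε ^ 2 / (2 * ∑ i, ‖c i (X ω)‖ ^ 2)) ∧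
        (∑ i, ‖c i (X ω)‖ ^ 2 = 0 →
          (μ[{ω' | ε ≤ |(∑ i, c i (X ω') * Y i ω').re|}.indicator (fun _ => (1 : ℝ))
            | mβ.comap X]) ω = 0) := by
  have := hindep.isProbabilityMeasure
  have hA : MeasurableSet {z : β × (ι → ℂ) | ε ≤ |(∑ i, c i z.1 * z.2 i).re|} :=
    measurableSet_le measurable_const (by fun_prop)
  filter_upwards [condExp_indicator_of_indepFun hX (measurable_pi_lambda _ hY) hXY hA]
    with ω hω
  refine ⟨hω.trans_le (measureReal_abs_re_sum_mul_ge_le (fun i => (hY i).aemeasurable) hindep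
    hbound hmean (fun i => c i (X ω)) hε.le), fun hzero => hω.trans ?_⟩
  have hcoef : ∀ i, c i (X ω) = 0 := by
    simpa [Finset.sum_eq_zero_iff_of_nonneg] using hzero
  simp [hcoef, hε.not_ge]

end Probability

section LargestPrimeFactor

lemma Pfac_eq_sup {n : ℕ} (hn : 1 < n) : Pfac n = n.primeFactors.sup id := if_neg hn.not_ge

lemma Pfac_mem_primeFactors {n : ℕ} (hn : 1 < n) : Pfac n ∈ n.primeFactors := by
  obtain ⟨q, hq, hsup⟩ := n.primeFactors.exists_mem_eq_sup (Nat.nonempty_primeFactors.2 hn) id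
  rwa [Pfac_eq_sup hn, hsup]

lemma Pfac_mul_of_le {p m : ℕ} (hp : p.Prime) (hm : m ≠ 0) (hmp : m ≤ p) : Pfac (p * m) = p := by
  have hpm : 1 < p * m := hp.one_lt.trans_le (Nat.le_mul_of_pos_right p (Nat.pos_of_ne_zero hm))
  rw [Pfac_eq_sup hpm, Nat.primeFactors_mul hp.ne_zero hm, hp.primeFactors, Finset.sup_union,
    Finset.sup_singleton, id_eq, sup_eq_left]
  exact Finset.sup_le fun q hq => (Nat.le_of_mem_primeFactors hq).trans hmp

/-- The primes in `(√x, x]`, which index the outer sum of `Vst`. -/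
def largePrimes (x : ℝ) : Finset ℕ :=
  {p ∈ Finset.Icc 1 ⌊x⌋₊ | p.Prime ∧ √x < p}

lemma mem_largePrimes {x : ℝ} {p : ℕ} : p ∈ largePrimes x ↔ p.Prime ∧ √x < p ∧ p ≤ x := by
  simp only [largePrimes, Finset.mem_filter, Finset.mem_Icc]
  constructor
  · rintro ⟨⟨-, hpx⟩, hp, hlt⟩
    exact ⟨hp, hlt, (Nat.le_floor_iff' hp.ne_zero).1 hpx⟩
  · rintro ⟨hp, hlt, hpx⟩
    exact ⟨⟨hp.one_le, Nat.le_floor hpx⟩, hp, hlt⟩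

lemma le_sqrt_of_le_floor_div {x : ℝ} {p m : ℕ} (hp : p ∈ largePrimes x)
    (hm : m ≤ ⌊x / p⌋₊) : (m : ℝ) ≤ √x := by
  obtain ⟨hprime, hlt, hpx⟩ := mem_largePrimes.1 hp
  have hx : 0 < x := (Nat.cast_pos.2 hprime.pos).trans_le hpx
  calc (m : ℝ) ≤ x / p := (Nat.le_floor_iff (by positivity)).1 hm
    _ ≤ x / √x := by gcongr
    _ = √x := div_sqrt

lemma Pfac_mem_largePrimes {x : ℝ} {n : ℕ} (hn : n ∈ Finset.Icc 1 ⌊x⌋₊) (hlt : √x < Pfac n) :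
    Pfac n ∈ largePrimes x ∧ Pfac n ∣ n ∧ n / Pfac n ∈ Finset.Icc 1 ⌊x / Pfac n⌋₊ := by
  obtain ⟨hn1, hnfloor⟩ := Finset.mem_Icc.1 hn
  have hnx : (n : ℝ) ≤ x := (Nat.le_floor_iff' (by lia)).1 hnfloor
  have hn_gt : 1 < n := by
    by_contra! hle
    have hx : 1 ≤ √x := one_le_sqrt.2 ((Nat.one_le_cast.2 hn1).trans hnx)
    rw [Pfac, if_pos hle, Nat.cast_one] at hlt
    exact hlt.not_ge hx
  have hmem := Pfac_mem_primeFactors hn_gt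
  have hprime := Nat.prime_of_mem_primeFactors hmem
  have hdvd := Nat.dvd_of_mem_primeFactors hmem
  have hle := Nat.le_of_mem_primeFactors hmem
  refine ⟨mem_largePrimes.2 ⟨hprime, hlt, (Nat.cast_le.2 hle).trans hnx⟩, hdvd,
    Finset.mem_Icc.2 ⟨Nat.div_pos hle hprime.pos, Nat.le_floor ?_⟩⟩
  rw [Nat.cast_div hdvd (Nat.cast_ne_zero.2 hprime.ne_zero)]
  gcongr

lemma Pfac_mul_of_mem_largePrimes {x : ℝ} {p m : ℕ} (hp : p ∈ largePrimes x)
    (hm : m ∈ Finset.Icc 1 ⌊x / p⌋₊) : Pfac (p * m) = p ∧ p * m ∈ Finset.Icc 1 ⌊x⌋₊ := by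
  obtain ⟨hprime, hlt, -⟩ := mem_largePrimes.1 hp
  obtain ⟨hm1, hmfloor⟩ := Finset.mem_Icc.1 hm
  have hmp : m ≤ p := by exact_mod_cast (le_sqrt_of_le_floor_div hp hmfloor).trans hlt.le
  refine ⟨Pfac_mul_of_le hprime (by lia) hmp,
    Finset.mem_Icc.2 ⟨Nat.mul_pos hprime.pos hm1, Nat.le_floor ?_⟩⟩
  have hmx : (m : ℝ) ≤ x / p := (Nat.le_floor_iff' (by lia)).1 hmfloor
  rw [Nat.cast_mul]
  exact (le_div_iff₀' (Nat.cast_pos.2 hprime.pos)).1 hmx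

lemma sum_sqrt_lt_Pfac {E : Type*} [AddCommMonoid E] (x : ℝ) (a : ℕ → E) :
    ∑ n ∈ Finset.Icc 1 ⌊x⌋₊ with √x < Pfac n, a n =
      ∑ p ∈ largePrimes x, ∑ m ∈ Finset.Icc 1 ⌊x / p⌋₊, a (p * m) := by
  rw [Finset.sum_sigma']
  refine Finset.sum_bij' (fun n _ => (⟨Pfac n, n / Pfac n⟩ : (_ : ℕ) × ℕ))
    (fun q _ => q.1 * q.2) ?_ ?_ ?_ ?_ ?_
  · intro n hn
    obtain ⟨hn, hlt⟩ := Finset.mem_filter.1 hn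
    obtain ⟨hp, -, hm⟩ := Pfac_mem_largePrimes hn hlt
    exact Finset.mem_sigma.2 ⟨hp, hm⟩
  · rintro ⟨p, m⟩ hpm
    obtain ⟨hp, hm⟩ := Finset.mem_sigma.1 hpm
    obtain ⟨hPfac, hmem⟩ := Pfac_mul_of_mem_largePrimes hp hm
    refine Finset.mem_filter.2 ⟨hmem, ?_⟩
    rw [hPfac]
    exact (mem_largePrimes.1 hp).2.1
  · intro n hn
    obtain ⟨hn, hlt⟩ := Finset.mem_filter.1 hn
    exact Nat.mul_div_cancel' (Pfac_mem_largePrimes hn hlt).2.1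
  · rintro ⟨p, m⟩ hpm
    obtain ⟨hp, hm⟩ := Finset.mem_sigma.1 hpm
    simp only [(Pfac_mul_of_mem_largePrimes hp hm).1,
      Nat.mul_div_cancel_left m (mem_largePrimes.1 hp).1.pos]
  · intro n hn
    obtain ⟨hn, hlt⟩ := Finset.mem_filter.1 hn
    rw [Nat.mul_div_cancel' (Pfac_mem_largePrimes hn hlt).2.1]

end LargestPrimeFactor

section RandomMultiplicativeFunction

variable {Ω : Type*} [MeasurableSpace Ω] {μ : Measure Ω} {f : Ω → ℕ → ℂ}

/-- The summatory function `t ↦ ∑_{m ≤ t} a(m)` of an arithmetic function, starting at `m = 1`. -/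
def partialSum (a : ℕ → ℂ) (t : ℝ) : ℂ := ∑ m ∈ Finset.Icc 1 ⌊t⌋₊, a m

/-- A random completely multiplicative function whose values at the primes are independent, centred
and almost surely in the closed unit disc. Besides the Steinhaus functions this covers, for
instance, independent uniform signs at the primes. As in `IsSteinhausRMF`, nothing is required of
the value at `0`. -/
structure IsCenteredRMF (μ : Measure Ω) (f : Ω → ℕ → ℂ) : Prop where
  measurable_prime : ∀ p : ℕ, p.Prime → Measurable fun ω => f ω p
  iIndepFun_primes : iIndepFun (fun (p : Nat.Primes) ω => f ω p) μ
  ae_norm_le_one : ∀ p : ℕ, p.Prime → ∀ᵐ ω ∂μ, ‖f ω p‖ ≤ 1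
  integral_eq_zero : ∀ p : ℕ, p.Prime → ∫ ω, f ω p ∂μ = 0
  map_one : ∀ ω, f ω 1 = 1
  map_mul : ∀ ω m n, m ≠ 0 → n ≠ 0 → f ω (m * n) = f ω m * f ω n

namespace IsCenteredRMF

lemma Mst_eq_sum (hf : IsCenteredRMF μ f) (ω : Ω) (x : ℝ) :
    Mst f ω x = ∑ p ∈ largePrimes x, partialSum (f ω) (x / p) * f ω p := by
  rw [Mst, sum_sqrt_lt_Pfac]
  refine Finset.sum_congr rfl fun p hp => ?_
  rw [partialSum, Finset.sum_mul]
  refine Finset.sum_congr rfl fun m hm => ?_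
  rw [hf.map_mul ω p m (mem_largePrimes.1 hp).1.ne_zero
    (Nat.one_le_iff_ne_zero.1 (Finset.mem_Icc.1 hm).1), mul_comm]

lemma sigmaAlgSqrt_le (hf : IsCenteredRMF μ f) (x : ℝ) : sigmaAlgSqrt f x ≤ ‹MeasurableSpace Ω› :=
  iSup₂_le fun p hp => (hf.measurable_prime p hp.1).comap_le

lemma measurable_sigmaAlgSqrt (hf : IsCenteredRMF μ f) {x : ℝ} {n : ℕ} (hn : n ≠ 0)
    (hnx : n ≤ √x) : Measurable[sigmaAlgSqrt f x] fun ω => f ω n := by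
  induction n using Nat.recOnMul with
  | zero => exact absurd rfl hn
  | one =>
    simp only [hf.map_one]
    exact measurable_const
  | prime p hp =>
    exact .of_comap_le (le_biSup (fun p => MeasurableSpace.comap (fun ω => f ω p) inferInstance)
      ⟨hp, hnx⟩)
  | mul m n ihm ihn =>
    obtain ⟨hm0, hn0⟩ := mul_ne_zero_iff.1 hn
    simp only [hf.map_mul _ m n hm0 hn0]
    have hmle : m ≤ m * n := Nat.le_mul_of_pos_right m (Nat.pos_of_ne_zero hn0)
    have hnle : n ≤ m * n := Nat.le_mul_of_pos_left n (Nat.pos_of_ne_zero hm0)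
    exact (ihm hm0 ((Nat.cast_le.2 hmle).trans hnx)).mul (ihn hn0 ((Nat.cast_le.2 hnle).trans hnx))

lemma measurable_partialSum (hf : IsCenteredRMF μ f) {x : ℝ} {p : ℕ} (hp : p ∈ largePrimes x) :
    Measurable[sigmaAlgSqrt f x] fun ω => partialSum (f ω) (x / p) :=
  Finset.measurable_fun_sum _ fun _ hm =>
    hf.measurable_sigmaAlgSqrt (Nat.one_le_iff_ne_zero.1 (Finset.mem_Icc.1 hm).1)
      (le_sqrt_of_le_floor_div hp (Finset.mem_Icc.1 hm).2)

lemma indep_sigmaAlgSqrt (hf : IsCenteredRMF μ f) (x : ℝ) :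
    Indep (sigmaAlgSqrt f x)
      (MeasurableSpace.comap (fun ω (p : largePrimes x) => f ω p) inferInstance) μ := by
  let valueAlg (p : Nat.Primes) : MeasurableSpace Ω := .comap (fun ω => f ω p) inferInstance
  let small : Set Nat.Primes := {p | (p : ℝ) ≤ √x}
  let large : Set Nat.Primes := {p | √x < p}
  have hdisj : Disjoint small large := Set.disjoint_left.2 fun p (hle : (p : ℝ) ≤ √x) => hle.not_gt
  have hindep : Indep (⨆ p ∈ small, valueAlg p) (⨆ p ∈ large, valueAlg p) μ :=
    indep_iSup_of_disjoint (fun p : Nat.Primes => (hf.measurable_prime p p.2).comap_le)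
      hf.iIndepFun_primes.iIndep hdisj
  have hsmall : sigmaAlgSqrt f x ≤ ⨆ p ∈ small, valueAlg p :=
    iSup₂_le fun p hp => le_biSup valueAlg (i := ⟨p, hp.1⟩) hp.2
  have hlarge : MeasurableSpace.comap (fun ω (p : largePrimes x) => f ω p) inferInstance ≤
      ⨆ p ∈ large, valueAlg p := by
    simp only [MeasurableSpace.pi, MeasurableSpace.comap_iSup, MeasurableSpace.comap_comp]
    refine iSup_le fun p => ?_
    obtain ⟨hp, hlt, -⟩ := mem_largePrimes.1 p.2
    exact le_biSup valueAlg (i := ⟨p, hp⟩) hlt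
  exact indep_of_indep_of_le_right (indep_of_indep_of_le_left hindep hsmall) hlarge

lemma iIndepFun_largePrimes (hf : IsCenteredRMF μ f) (x : ℝ) :
    iIndepFun (fun (p : largePrimes x) ω => f ω p) μ :=
  hf.iIndepFun_primes.precomp (g := fun p : largePrimes x => ⟨p, (mem_largePrimes.1 p.2).1⟩)
    fun _ _ h => Subtype.ext (Subtype.mk.inj h)

end IsCenteredRMF

namespace IsSteinhausRMF

lemma ae_norm_eq_one (hf : IsSteinhausRMF μ f) {p : ℕ} (hp : p.Prime) :
    ∀ᵐ ω ∂μ, ‖f ω p‖ = 1 := by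
  have hcircle : MeasurableSet {z : ℂ | ‖z‖ = 1} :=
    measurableSet_eq_fun measurable_norm measurable_const
  refine (ae_map_iff (hf.meas p).aemeasurable hcircle).1 ?_
  rw [hf.unif p hp, ae_map_iff (by fun_prop) hcircle]
  exact .of_forall fun θ => mod_cast Complex.norm_exp_ofReal_mul_I (2 * π * θ)

lemma integral_eq_zero (hf : IsSteinhausRMF μ f) {p : ℕ} (hp : p.Prime) :
    ∫ ω, f ω p ∂μ = 0 := by
  calc ∫ ω, f ω p ∂μ
      = ∫ z, z ∂μ.map (fun ω => f ω p) :=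
        (integral_map (hf.meas p).aemeasurable aestronglyMeasurable_id).symm
    _ = ∫ θ in (0 : ℝ)..1, Complex.exp (2 * π * Complex.I * θ) := by
        rw [hf.unif p hp, integral_map (by fun_prop) measurable_id'.aestronglyMeasurable,
          intervalIntegral.integral_of_le zero_le_one]
        simp only [mul_right_comm _ Complex.I]
    _ = 0 := by
        rw [integral_exp_mul_complex Complex.two_pi_I_ne_zero]
        simp [Complex.exp_two_pi_mul_I]

lemma isCenteredRMF (hf : IsSteinhausRMF μ f) : IsCenteredRMF μ f where
  measurable_prime p _ := hf.meas p
  iIndepFun_primes := hf.indep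
  ae_norm_le_one _ hp := (hf.ae_norm_eq_one hp).mono fun _ h => h.le
  integral_eq_zero _ hp := hf.integral_eq_zero hp
  map_one := hf.map_one
  map_mul ω m n hm hn :=
    hf.map_mul ω m n (Nat.one_le_iff_ne_zero.2 hm) (Nat.one_le_iff_ne_zero.2 hn)

end IsSteinhausRMF

theorem conditional_hoeffding_steinhaus_general (hf : IsCenteredRMF μ f)
    (x : ℝ) {lam : ℝ} (hlam : 0 < lam) {u : ℂ} (hu : ‖u‖ = 1) :
    ∀ᵐ ω ∂μ,
      (μ[Set.indicator {ω' | lam ≤ |(u * Mst f ω' x).re|} (fun _ => (1 : ℝ))|sigmaAlgSqrt f x]) ω ≤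
          2 * exp (-(lam ^ 2) / (2 * Vst f ω x)) ∧
        (Vst f ω x = 0 →
          (μ[Set.indicator {ω' | lam ≤ |(u * Mst f ω' x).re|}
              (fun _ => (1 : ℝ))|sigmaAlgSqrt f x]) ω = 0) := by
  let c (p : largePrimes x) (ω : Ω) : ℂ := u * partialSum (f ω) (x / p)
  have hc : ∀ p, Measurable[sigmaAlgSqrt f x] (c p) := fun p =>
    (hf.measurable_partialSum p.2).const_mul u
  have hM : ∀ ω, u * Mst f ω x = ∑ p, c p ω * f ω p := fun ω => by
    simp only [hf.Mst_eq_sum, Finset.mul_sum, ← mul_assoc, c]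
    exact (Finset.sum_coe_sort (largePrimes x) _).symm
  have hV : ∀ ω, Vst f ω x = ∑ p, ‖c p ω‖ ^ 2 := fun ω => by
    simp only [c, norm_mul, hu, one_mul]
    exact (Finset.sum_coe_sort (largePrimes x) _).symm
  have hprime : ∀ p : largePrimes x, (p : ℕ).Prime := fun p => (mem_largePrimes.1 p.2).1
  -- The variable conditioned on is `id`, as a map from `Ω` to `Ω` with the σ-algebra `𝓕(√x)`.
  have hindep := (IndepFun_iff_Indep (mβ := sigmaAlgSqrt f x) id
    (fun ω (p : largePrimes x) => f ω p) μ).2 (by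
      rw [MeasurableSpace.comap_id]
      exact hf.indep_sigmaAlgSqrt x)
  have hcond := condExp_abs_re_sum_mul_ge_le (mβ := sigmaAlgSqrt f x)
    (measurable_id'' (hf.sigmaAlgSqrt_le x)) hc (fun p => hf.measurable_prime p (hprime p)) hindep
    (hf.iIndepFun_largePrimes x) (fun p => hf.ae_norm_le_one p (hprime p))
    (fun p => hf.integral_eq_zero p (hprime p)) hlam
  simpa only [hM, hV, MeasurableSpace.comap_id, id_eq] using hcond

end RandomMultiplicativeFunction

/-- Conditional Hoeffding bound for the Steinhaus case: almost surely,
`ℙ(|Re M_f(x)| ≥ λ | 𝓕(√x)) ≤ 2 exp(-λ²/(2 V(x)))` and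
`ℙ(|Im M_f(x)| ≥ λ | 𝓕(√x)) ≤ 2 exp(-λ²/(2 V(x)))`, with the left-hand sides
vanishing on `{V(x) = 0}`. -/
theorem conditional_hoeffding_steinhaus
    {Ω : Type*} [MeasurableSpace Ω] (μ : Measure Ω) [IsProbabilityMeasure μ]
    (f : Ω → ℕ → ℂ) (hf : IsSteinhausRMF μ f) (x : ℝ) (hx : 4 ≤ x)
    (lam : ℝ) (hlam : 0 < lam) :
    ∀ᵐ ω ∂μ,
      ((μ[Set.indicator {ω' | lam ≤ |(Mst f ω' x).re|} (fun _ => (1 : ℝ))|sigmaAlgSqrt f x]) ω ≤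
          2 * Real.exp (-(lam ^ 2) / (2 * Vst f ω x)) ∧
        (Vst f ω x = 0 →
          (μ[Set.indicator {ω' | lam ≤ |(Mst f ω' x).re|}
              (fun _ => (1 : ℝ))|sigmaAlgSqrt f x]) ω = 0)) ∧
      ((μ[Set.indicator {ω' | lam ≤ |(Mst f ω' x).im|} (fun _ => (1 : ℝ))|sigmaAlgSqrt f x]) ω ≤
          2 * Real.exp (-(lam ^ 2) / (2 * Vst f ω x)) ∧
        (Vst f ω x = 0 →
          (μ[Set.indicator {ω' | lam ≤ |(Mst f ω' x).im|}
              (fun _ => (1 : ℝ))|sigmaAlgSqrt f x]) ω = 0)) := by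
  have hcent := hf.isCenteredRMF
  filter_upwards [conditional_hoeffding_steinhaus_general hcent x hlam (u := 1) (by simp),
    conditional_hoeffding_steinhaus_general hcent x hlam (u := -Complex.I) (by simp)] with ω hre him
  exact ⟨by simpa using hre, by simpa using him⟩
end
end

section
/- Let f be a Rademacher random multiplicative function and let q ≥ 1 be an integer. There exists a constant C = C(q) > 0 such that for all real x ≥ 2 and X ≥ 1, every prime p with √x < p ≤ x/(X+1), and every real t with p ≤ t ≤ p·(1+1/X), one has E[|∑_{x/t < m ≤ x/p} f(m)|^{2q}] ≤ C · (x/p)^q · (log x)^{4q²−6q+2} · X^{−1/2}. -/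
open MeasureTheory ProbabilityTheory

noncomputable section

/-- A Rademacher random multiplicative function. -/
structure IsRademacherRMF {Ω : Type*} [MeasurableSpace Ω] (μ : Measure Ω)
    (f : Ω → ℕ → ℝ) : Prop where
  meas : ∀ n : ℕ, Measurable fun ω => f ω n
  indep : iIndepFun
    (fun (p : Nat.Primes) (ω : Ω) => f ω (p : ℕ)) μ
  prob_one : ∀ p : ℕ, p.Prime → μ {ω | f ω p = 1} = 1 / 2
  prob_neg_one : ∀ p : ℕ, p.Prime → μ {ω | f ω p = -1} = 1 / 2
  eq_zero_of_not_squarefree : ∀ (ω : Ω) (n : ℕ), ¬Squarefree n → f ω n = 0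
  eq_prod_of_squarefree : ∀ (ω : Ω) (n : ℕ), Squarefree n →
    f ω n = ∏ p ∈ n.primeFactors, f ω p

/-!
Let `S` be the sum of `f m` over `x / t < m ≤ x / p`, and put `y = x / p`. By Cauchy–Schwarz
`E |S| ^ (2q) ≤ (E S ^ 2) ^ (1/2) * (E S ^ (4q - 2)) ^ (1/2)`.
The second moment is at most the number of terms, which is `≪ y / X`: this is the
source of the saving `X ^ (-1/2)`. The higher moment forgets that the interval is short. As a
polynomial in the independent signs `f p`, `S` is multilinear, so hypercontractivity (Bonami's
inequality) bounds its moment of order `2k` by the `k`-th power of the sum of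
`(2k - 1) ^ ω(m)` over squarefree `m`. The summand is the value at `m` of the `(2k - 1)`-fold
divisor function, whose sum up to `y` is at most `y (1 + log y) ^ (2k - 2)`; take `k = 2q - 1`.
-/

open Finset

section TwoPoint

lemma choose_two_mul_two_mul_le (k j : ℕ) :
    (2 * k).choose (2 * j) ≤ k.choose j * (2 * k - 1) ^ j := by
  induction j with
  | zero => simp
  | succ j ih =>
    refine Nat.le_of_mul_le_mul_right (c := (2 * j + 2) * (2 * j + 1)) ?_ (by positivity)
    calc (2 * k).choose (2 * j + 2) * ((2 * j + 2) * (2 * j + 1))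
        = (2 * k).choose (2 * j + 1) * (2 * j + 1) * (2 * k - (2 * j + 1)) := by
          rw [← mul_assoc, Nat.choose_succ_right_eq]; ring
      _ = (2 * k).choose (2 * j) * (2 * k - 2 * j) * (2 * k - (2 * j + 1)) := by
          rw [Nat.choose_succ_right_eq]
      _ ≤ k.choose j * (2 * k - 1) ^ j * (2 * (k - j)) * (2 * k - 1) := by
          gcongr <;> omega
      _ = k.choose (j + 1) * (j + 1) * (2 * (2 * k - 1) ^ (j + 1)) := by
          rw [Nat.choose_succ_right_eq]; ring
      _ = k.choose (j + 1) * (2 * k - 1) ^ (j + 1) * ((2 * j + 2) * 1) := by ring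
      _ ≤ k.choose (j + 1) * (2 * k - 1) ^ (j + 1) * ((2 * j + 2) * (2 * j + 1)) := by
          gcongr; omega

lemma sum_range_two_mul_add_one_of_odd_eq_zero {M : Type*} [AddCommMonoid M] {u : ℕ → M}
    (hu : ∀ j, u (2 * j + 1) = 0) (k : ℕ) :
    ∑ i ∈ range (2 * k + 1), u i = ∑ j ∈ range (k + 1), u (2 * j) := by
  induction k with
  | zero => simp
  | succ k ih =>
    rw [sum_range_succ _ (k + 1), ← ih, mul_add_one, sum_range_succ, sum_range_succ _ (2 * k + 1),
      hu, add_zero]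

lemma add_pow_add_sub_pow_div_two (k : ℕ) (a b : ℝ) :
    ((a + b) ^ (2 * k) + (a - b) ^ (2 * k)) / 2 =
      ∑ j ∈ range (k + 1), (b ^ 2) ^ j * (a ^ 2) ^ (k - j) * (2 * k).choose (2 * j) := by
  have hterms : ((a + b) ^ (2 * k) + (a - b) ^ (2 * k)) / 2 = ∑ i ∈ range (2 * k + 1),
      (1 + (-1) ^ i) / 2 * (b ^ i * a ^ (2 * k - i) * (2 * k).choose i) := by
    rw [sub_eq_neg_add, add_comm a, add_pow, add_pow, ← sum_add_distrib, sum_div]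
    refine sum_congr rfl fun i _ => ?_
    rw [neg_pow b]
    ring
  rw [hterms, sum_range_two_mul_add_one_of_odd_eq_zero fun j => by simp [pow_succ, pow_mul]]
  refine sum_congr rfl fun j _ => ?_
  rw [← Nat.mul_sub, pow_mul, pow_mul, pow_mul]
  norm_num

lemma add_pow_add_sub_pow_div_two_le {k : ℕ} (hk : k ≠ 0) (a b : ℝ) :
    ((a + b) ^ (2 * k) + (a - b) ^ (2 * k)) / 2 ≤ (a ^ 2 + (2 * k - 1) * b ^ 2) ^ k := by
  rw [add_pow_add_sub_pow_div_two, add_comm (a ^ 2), add_pow]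
  refine sum_le_sum fun j _ => ?_
  have hchoose : ((2 * k).choose (2 * j) : ℝ) ≤ k.choose j * (2 * k - 1) ^ j := by
    have hcast : ((2 * k - 1 : ℕ) : ℝ) = 2 * k - 1 := by
      rw [Nat.cast_pred (by positivity)]; push_cast; rfl
    rw [← hcast]
    exact_mod_cast choose_two_mul_two_mul_le k j
  calc (b ^ 2) ^ j * (a ^ 2) ^ (k - j) * (2 * k).choose (2 * j)
      ≤ (b ^ 2) ^ j * (a ^ 2) ^ (k - j) * (k.choose j * (2 * k - 1) ^ j) := by gcongr
    _ = ((2 * k - 1) * b ^ 2) ^ j * (a ^ 2) ^ (k - j) * k.choose j := by rw [mul_pow]; ring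

end TwoPoint

section Lp

variable {α : Type*} [MeasurableSpace α] {μ : Measure α}

lemma lpNorm_natCast_pow {E : Type*} [NormedAddCommGroup E] {f : α → E} {k : ℕ} (hk : k ≠ 0)
    (hf : AEStronglyMeasurable f μ) : lpNorm f k μ ^ k = ∫ x, ‖f x‖ ^ k ∂μ := by
  rw [lpNorm_eq_integral_norm_rpow_toReal (by exact_mod_cast hk) (ENNReal.natCast_ne_top k) hf]
  simp only [ENNReal.toReal_natCast, Real.rpow_natCast]
  exact Real.rpow_inv_natCast_pow (integral_nonneg fun x => by positivity) hk

lemma integrable_pow_of_memLp {f : α → ℝ} {n : ℕ} (hn : n ≠ 0) (hf : MemLp f n μ) :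
    Integrable (fun x => f x ^ n) μ :=
  (integrable_norm_iff (hf.1.pow n)).1 <| by
    simpa only [Pi.pow_apply, norm_pow] using hf.integrable_norm_pow hn

lemma memLp_sq_of_memLp_two_mul {f : α → ℝ} {k : ℕ} (hf : MemLp f (2 * k : ℕ) μ) :
    MemLp (fun x => f x ^ 2) k μ := by
  have hexp : ((2 * k : ℕ) : ENNReal) / 2 = k := by
    rw [Nat.cast_mul, mul_comm]
    exact ENNReal.mul_div_cancel_right two_ne_zero ENNReal.ofNat_ne_top
  simpa only [hexp, ENNReal.toReal_ofNat, Real.rpow_ofNat, Real.norm_eq_abs, sq_abs]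
    using hf.norm_rpow_div 2

lemma sq_integral_abs_mul_abs_le {f g : α → ℝ} (hf : MemLp f 2 μ) (hg : MemLp g 2 μ) :
    (∫ x, |f x| * |g x| ∂μ) ^ 2 ≤ (∫ x, f x ^ 2 ∂μ) * ∫ x, g x ^ 2 ∂μ := by
  have hHolder := integral_mul_le_Lp_mul_Lq_of_nonneg Real.HolderConjugate.two_two
    (ae_of_all μ fun x => abs_nonneg (f x)) (ae_of_all μ fun x => abs_nonneg (g x))
    (by simpa using! hf.abs) (by simpa using! hg.abs)
  simp only [Real.rpow_ofNat, sq_abs, ← Real.sqrt_eq_rpow] at hHolder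
  calc (∫ x, |f x| * |g x| ∂μ) ^ 2
      ≤ (√(∫ x, f x ^ 2 ∂μ) * √(∫ x, g x ^ 2 ∂μ)) ^ 2 :=
        pow_le_pow_left₀ (integral_nonneg fun x => by positivity) hHolder 2
    _ = (∫ x, f x ^ 2 ∂μ) * ∫ x, g x ^ 2 ∂μ := by
        rw [mul_pow, Real.sq_sqrt (integral_nonneg fun x => sq_nonneg _),
          Real.sq_sqrt (integral_nonneg fun x => sq_nonneg _)]

end Lp

/-- A random sign (Rademacher variable): it is almost surely `1` or `-1`, and the two values are
equally likely. The latter is encoded as the vanishing of the mean, the form in which it is used. -/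
structure IsRandomSign {Ω : Type*} [MeasurableSpace Ω] (μ : Measure Ω) (ε : Ω → ℝ) : Prop where
  measurable : Measurable ε
  eq_one_or_eq_neg_one : ∀ᵐ ω ∂μ, ε ω = 1 ∨ ε ω = -1
  integral_eq_zero : ∫ ω, ε ω ∂μ = 0

namespace IsRandomSign

variable {Ω : Type*} [MeasurableSpace Ω] {μ : Measure Ω} {ε U V : Ω → ℝ}

lemma abs_eq_one (hε : IsRandomSign μ ε) : ∀ᵐ ω ∂μ, |ε ω| = 1 := by
  filter_upwards [hε.eq_one_or_eq_neg_one] with ω hω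
  rcases hω with hω | hω <;> simp [hω]

lemma integral_comp_add_mul (hε : IsRandomSign μ ε)
    (hind : IndepFun (fun ω => (U ω, V ω)) ε μ) {φ : ℝ → ℝ} (hφ : Measurable φ)
    (hadd : Integrable (fun ω => φ (U ω + V ω)) μ)
    (hsub : Integrable (fun ω => φ (U ω - V ω)) μ) :
    ∫ ω, φ (U ω + ε ω * V ω) ∂μ = ∫ ω, (φ (U ω + V ω) + φ (U ω - V ω)) / 2 ∂μ := by
  set D : Ω → ℝ := fun ω => (φ (U ω + V ω) - φ (U ω - V ω)) / 2 with hD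
  have hmean_int : Integrable (fun ω => (φ (U ω + V ω) + φ (U ω - V ω)) / 2) μ :=
    (hadd.add hsub).div_const 2
  have hDint : Integrable D μ := (hadd.sub hsub).div_const 2
  have hDε : IndepFun D ε μ :=
    hind.comp (φ := fun z : ℝ × ℝ => (φ (z.1 + z.2) - φ (z.1 - z.2)) / 2) (by fun_prop)
      measurable_id
  have hDε_int : Integrable (fun ω => D ω * ε ω) μ :=
    hDint.mul_bdd (c := 1) hε.measurable.aestronglyMeasurable
      (hε.abs_eq_one.mono fun _ h => h.le)
  have hDε_mean : ∫ ω, D ω * ε ω ∂μ = 0 := by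
    rw [hDε.integral_fun_mul_eq_mul_integral hDint.1 hε.measurable.aestronglyMeasurable,
      hε.integral_eq_zero, mul_zero]
  calc ∫ ω, φ (U ω + ε ω * V ω) ∂μ
      = ∫ ω, ((φ (U ω + V ω) + φ (U ω - V ω)) / 2 + D ω * ε ω) ∂μ := by
        refine integral_congr_ae (hε.eq_one_or_eq_neg_one.mono fun ω hω => ?_)
        rcases hω with hω | hω <;> simp only [hD, hω] <;> ring_nf
    _ = ∫ ω, (φ (U ω + V ω) + φ (U ω - V ω)) / 2 ∂μ := by
        rw [integral_add hmean_int hDε_int, hDε_mean, add_zero]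

lemma integral_add_mul_pow_le (hε : IsRandomSign μ ε)
    (hind : IndepFun (fun ω => (U ω, V ω)) ε μ) {k : ℕ} (hk : k ≠ 0)
    (hU : MemLp U (2 * k : ℕ) μ) (hV : MemLp V (2 * k : ℕ) μ) :
    ∫ ω, (U ω + ε ω * V ω) ^ (2 * k) ∂μ ≤ ∫ ω, (U ω ^ 2 + (2 * k - 1) * V ω ^ 2) ^ k ∂μ := by
  have h2k : 2 * k ≠ 0 := by positivity
  have hadd := integrable_pow_of_memLp h2k (hU.add hV)
  have hsub := integrable_pow_of_memLp h2k (hU.sub hV)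
  rw [hε.integral_comp_add_mul hind (φ := (· ^ (2 * k))) (by fun_prop) hadd hsub]
  exact integral_mono ((hadd.add hsub).div_const 2)
    (integrable_pow_of_memLp hk
      ((memLp_sq_of_memLp_two_mul hU).add ((memLp_sq_of_memLp_two_mul hV).const_mul _)))
    fun ω => add_pow_add_sub_pow_div_two_le hk (U ω) (V ω)

lemma lpNorm_sq_add_mul_le (hε : IsRandomSign μ ε)
    (hind : IndepFun (fun ω => (U ω, V ω)) ε μ) {k : ℕ} (hk : k ≠ 0)
    (hU : MemLp U (2 * k : ℕ) μ) (hV : MemLp V (2 * k : ℕ) μ) :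
    lpNorm (fun ω => (U ω + ε ω * V ω) ^ 2) k μ ≤
      lpNorm (fun ω => U ω ^ 2) k μ + (2 * k - 1) * lpNorm (fun ω => V ω ^ 2) k μ := by
  have hk1 : (1 : ℝ) ≤ k := by exact_mod_cast Nat.one_le_iff_ne_zero.2 hk
  have hr : (0 : ℝ) ≤ 2 * k - 1 := by linarith
  have hU2 := memLp_sq_of_memLp_two_mul hU
  have hV2 := (memLp_sq_of_memLp_two_mul hV).const_smul (2 * k - 1 : ℝ)
  have hmeas : AEStronglyMeasurable (fun ω => (U ω + ε ω * V ω) ^ 2) μ :=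
    (hU.1.add (hε.measurable.aestronglyMeasurable.mul hV.1)).pow 2
  have htwo_point : lpNorm (fun ω => (U ω + ε ω * V ω) ^ 2) k μ ≤
      lpNorm ((fun ω => U ω ^ 2) + (2 * k - 1 : ℝ) • fun ω => V ω ^ 2) k μ := by
    refine (pow_le_pow_iff_left₀ lpNorm_nonneg lpNorm_nonneg hk).1 ?_
    rw [lpNorm_natCast_pow hk hmeas, lpNorm_natCast_pow hk (hU2.add hV2).1]
    have hnonneg (ω : Ω) : 0 ≤ U ω ^ 2 + (2 * k - 1) * V ω ^ 2 := by positivity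
    simpa only [Pi.add_apply, Pi.smul_apply, smul_eq_mul, Real.norm_eq_abs, abs_sq,
      abs_of_nonneg (hnonneg _), ← pow_mul] using hε.integral_add_mul_pow_le hind hk hU hV
  calc lpNorm (fun ω => (U ω + ε ω * V ω) ^ 2) k μ
      ≤ lpNorm ((fun ω => U ω ^ 2) + (2 * k - 1 : ℝ) • fun ω => V ω ^ 2) k μ := htwo_point
    _ ≤ lpNorm (fun ω => U ω ^ 2) k μ + lpNorm ((2 * k - 1 : ℝ) • fun ω => V ω ^ 2) k μ :=
        lpNorm_add_le hU2 (by exact_mod_cast hk1)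
    _ = lpNorm (fun ω => U ω ^ 2) k μ + (2 * k - 1) * lpNorm (fun ω => V ω ^ 2) k μ := by
        rw [lpNorm_const_smul, coe_nnnorm, Real.norm_of_nonneg hr]

end IsRandomSign

section Walsh

variable {ι Ω : Type*} [MeasurableSpace Ω] {μ : Measure Ω} {Y : ι → Ω → ℝ}

/-- The Walsh polynomial `∑ S ∈ 𝓐, a S * ∏ j ∈ S, x j`: a multilinear polynomial in the variables
`x j`, whose monomials are indexed by the sets of the family `𝓐`. -/
def walshPoly (𝓐 : Finset (Finset ι)) (a : Finset ι → ℝ) (x : ι → ℝ) : ℝ :=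
  ∑ S ∈ 𝓐, a S * ∏ j ∈ S, x j

lemma measurable_walshPoly (𝓐 : Finset (Finset ι)) (a : Finset ι → ℝ) :
    Measurable (walshPoly 𝓐 a) := by
  unfold walshPoly
  fun_prop

lemma dependsOn_walshPoly_powerset (P : Finset ι) (a : Finset ι → ℝ) :
    DependsOn (walshPoly P.powerset a) P := fun _ _ hxy =>
  sum_congr rfl fun _ hS => congrArg _ <| prod_congr rfl fun j hj => hxy j (mem_powerset.1 hS hj)

lemma memLp_walshPoly [IsFiniteMeasure μ] (hY : ∀ i, IsRandomSign μ (Y i))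
    (𝓐 : Finset (Finset ι)) (a : Finset ι → ℝ) (p : ENNReal) :
    MemLp (fun ω => walshPoly 𝓐 a (Y · ω)) p μ := by
  refine memLp_finsetSum 𝓐 fun S _ => MemLp.const_mul (MemLp.of_bound ?_ 1 ?_) (a S)
  · exact (measurable_fun_prod S fun j _ => (hY j).measurable).aestronglyMeasurable
  · filter_upwards [(Filter.eventually_all_finset S).2 fun j _ => (hY j).abs_eq_one] with ω hω
    rw [Real.norm_eq_abs, abs_prod, prod_eq_one hω]

lemma walshPoly_powerset_insert [DecidableEq ι] {P : Finset ι} {i : ι} (hi : i ∉ P)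
    (a : Finset ι → ℝ) (x : ι → ℝ) :
    walshPoly (insert i P).powerset a x =
      walshPoly P.powerset a x + x i * walshPoly P.powerset (fun S => a (insert i S)) x := by
  simp only [walshPoly]
  rw [sum_powerset_insert hi, mul_sum]
  congr 1
  refine sum_congr rfl fun S hS => ?_
  rw [prod_insert fun h => hi (mem_powerset.1 hS h), mul_left_comm]

lemma indepFun_comp_of_dependsOn {β γ : Type*} [MeasurableSpace β] [MeasurableSpace γ]
    {Z : ι → Ω → β} (hind : iIndepFun Z μ) (hZ : ∀ i, Measurable (Z i)) {g : (ι → β) → γ}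
    (hg : Measurable g) {P : Finset ι} (hgP : DependsOn g P) {i : ι} (hi : i ∉ P) :
    IndepFun (fun ω => g (Z · ω)) (Z i) μ := by
  classical
  have := hind.isProbabilityMeasure
  obtain ⟨ω₀⟩ := nonempty_of_isProbabilityMeasure μ
  have hrestrict := hind.indepFun_finset P {i} (disjoint_singleton_right.2 hi) hZ
  have heval : Measurable fun v : ({i} : Finset ι) → β => v ⟨i, mem_singleton_self i⟩ :=
    measurable_pi_apply _
  have hcomp := hrestrict.comp (φ := g ∘ Function.updateFinset (Z · ω₀) P)
    (hg.comp measurable_updateFinset) heval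
  refine hcomp.congr (ae_of_all μ fun ω => hgP fun j hj => ?_) (ae_of_all μ fun ω => rfl)
  simp only [Function.updateFinset, dif_pos (mem_coe.1 hj)]

-- Stated for the square of the polynomial because the square is where Minkowski's inequality in
-- `L ^ k` applies: averaging over one sign costs a factor `2 * k - 1` on the terms containing it.
lemma lpNorm_sq_walshPoly_powerset_le (hY : ∀ i, IsRandomSign μ (Y i)) (hind : iIndepFun Y μ)
    {k : ℕ} (hk : k ≠ 0) (P : Finset ι) (a : Finset ι → ℝ) :
    lpNorm (fun ω => walshPoly P.powerset a (Y · ω) ^ 2) k μ ≤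
      ∑ S ∈ P.powerset, a S ^ 2 * (2 * k - 1 : ℝ) ^ #S := by
  classical
  have := hind.isProbabilityMeasure
  induction P using Finset.induction_on generalizing a with
  | empty =>
    simp [walshPoly, lpNorm_const', hk]
  | insert i P hi ih =>
    have hr : (0 : ℝ) ≤ 2 * k - 1 := by
      have : (1 : ℝ) ≤ k := by exact_mod_cast Nat.one_le_iff_ne_zero.2 hk
      linarith
    have hpair : IndepFun (fun ω => (walshPoly P.powerset a (Y · ω),
        walshPoly P.powerset (fun S => a (insert i S)) (Y · ω))) (Y i) μ :=
      indepFun_comp_of_dependsOn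
        (g := fun y => (walshPoly P.powerset a y, walshPoly P.powerset (fun S => a (insert i S)) y))
        hind (fun j => (hY j).measurable)
        ((measurable_walshPoly _ _).prodMk (measurable_walshPoly _ _))
        (fun _ _ hxy => Prod.ext (dependsOn_walshPoly_powerset P _ hxy)
          (dependsOn_walshPoly_powerset P _ hxy)) hi
    simp only [walshPoly_powerset_insert hi]
    calc lpNorm (fun ω => (walshPoly P.powerset a (Y · ω) +
            Y i ω * walshPoly P.powerset (fun S => a (insert i S)) (Y · ω)) ^ 2) k μ
        ≤ lpNorm (fun ω => walshPoly P.powerset a (Y · ω) ^ 2) k μ + (2 * k - 1) *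
            lpNorm (fun ω => walshPoly P.powerset (fun S => a (insert i S)) (Y · ω) ^ 2) k μ :=
          (hY i).lpNorm_sq_add_mul_le hpair hk (memLp_walshPoly hY _ _ _) (memLp_walshPoly hY _ _ _)
      _ ≤ ∑ S ∈ P.powerset, a S ^ 2 * (2 * k - 1 : ℝ) ^ #S +
            (2 * k - 1) * ∑ S ∈ P.powerset, a (insert i S) ^ 2 * (2 * k - 1 : ℝ) ^ #S := by
          gcongr <;> exact ih _
      _ = ∑ S ∈ (insert i P).powerset, a S ^ 2 * (2 * k - 1 : ℝ) ^ #S := by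
          rw [sum_powerset_insert hi, mul_sum]
          congr 1
          refine sum_congr rfl fun S hS => ?_
          rw [card_insert_of_notMem fun h => hi (mem_powerset.1 hS h), pow_succ]
          ring

theorem integral_walshPoly_pow_le (hY : ∀ i, IsRandomSign μ (Y i)) (hind : iIndepFun Y μ)
    {k : ℕ} (hk : k ≠ 0) (𝓐 : Finset (Finset ι)) (a : Finset ι → ℝ) :
    ∫ ω, walshPoly 𝓐 a (Y · ω) ^ (2 * k) ∂μ ≤
      (∑ S ∈ 𝓐, a S ^ 2 * (2 * k - 1 : ℝ) ^ #S) ^ k := by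
  classical
  have := hind.isProbabilityMeasure
  set P := 𝓐.biUnion id
  set b : Finset ι → ℝ := fun S => if S ∈ 𝓐 then a S else 0 with hb
  have hsub : 𝓐 ⊆ P.powerset := fun S hS => mem_powerset.2 (subset_biUnion_of_mem id hS)
  have hpoly (y : ι → ℝ) : walshPoly 𝓐 a y = walshPoly P.powerset b y := by
    simp only [walshPoly, hb, ite_mul, zero_mul, sum_ite_mem, inter_eq_right.2 hsub]
  have hweight : ∑ S ∈ P.powerset, b S ^ 2 * (2 * k - 1 : ℝ) ^ #S =
      ∑ S ∈ 𝓐, a S ^ 2 * (2 * k - 1 : ℝ) ^ #S := by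
    simp only [hb, ite_pow, ne_eq, OfNat.ofNat_ne_zero, not_false_eq_true, zero_pow, ite_mul,
      zero_mul, sum_ite_mem, inter_eq_right.2 hsub]
  have hL2k := memLp_walshPoly hY P.powerset b (2 * k : ℕ)
  calc ∫ ω, walshPoly 𝓐 a (Y · ω) ^ (2 * k) ∂μ
      = lpNorm (fun ω => walshPoly P.powerset b (Y · ω) ^ 2) k μ ^ k := by
        rw [lpNorm_natCast_pow hk (memLp_sq_of_memLp_two_mul hL2k).1]
        simp only [hpoly, pow_mul, Real.norm_eq_abs, abs_sq]
    _ ≤ (∑ S ∈ 𝓐, a S ^ 2 * (2 * k - 1 : ℝ) ^ #S) ^ k := by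
        rw [← hweight]
        exact pow_le_pow_left₀ lpNorm_nonneg (lpNorm_sq_walshPoly_powerset_le hY hind hk P b) k

end Walsh

section DivisorFunction

open ArithmeticFunction

lemma zeta_pow_apply_prime (r : ℕ) {p : ℕ} (hp : p.Prime) : (zeta ^ r) p = r := by
  induction r with
  | zero => simp [hp.ne_one]
  | succ r ih =>
    rw [pow_succ, mul_zeta_apply, hp.sum_divisors, ih,
      (isMultiplicative_zeta.pow (k := r)).map_one]

lemma zeta_pow_apply_of_squarefree (r : ℕ) {n : ℕ} (hn : Squarefree n) :
    (zeta ^ r) n = r ^ #n.primeFactors := by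
  conv_lhs => rw [← Nat.prod_primeFactors_of_squarefree hn]
  rw [isMultiplicative_zeta.pow.map_prod_of_subset_primeFactors n _ Subset.rfl, ← prod_const]
  exact prod_congr rfl fun p hp => zeta_pow_apply_prime r (Nat.prime_of_mem_primeFactors hp)

lemma sum_Ioc_inv_le_one_add_log (N : ℕ) : ∑ n ∈ Ioc 0 N, (n : ℝ)⁻¹ ≤ 1 + Real.log N := by
  have h := harmonic_le_one_add_log N
  rw [harmonic_eq_sum_Icc] at h
  push_cast at h
  exact h

lemma sum_Ioc_zeta_pow_le (s N : ℕ) :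
    ∑ n ∈ Ioc 0 N, ((zeta ^ (s + 1)) n : ℝ) ≤ N * (1 + Real.log N) ^ s := by
  induction s generalizing N with
  | zero => simpa using (Nat.cast_le (α := ℝ)).2 (sum_Ioc_zeta N).le
  | succ s ih =>
    have : 0 ≤ Real.log N := Real.log_natCast_nonneg N
    have hinner (n : ℕ) (hn : n ∈ Ioc 0 N) :
        ∑ m ∈ Ioc 0 (N / n), ((zeta ^ (s + 1)) m : ℝ) ≤
          (n : ℝ)⁻¹ * (N * (1 + Real.log N) ^ s) := by
      obtain ⟨hn0, hnN⟩ := mem_Ioc.1 hn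
      have hdiv : ((N / n : ℕ) : ℝ) ≤ (n : ℝ)⁻¹ * N := by
        rw [inv_mul_eq_div]; exact Nat.cast_div_le
      have hlog_div : Real.log (N / n : ℕ) ≤ Real.log N :=
        Real.log_le_log (by exact_mod_cast Nat.div_pos hnN hn0)
          (by exact_mod_cast Nat.div_le_self N n)
      have : 0 ≤ Real.log (N / n : ℕ) := Real.log_natCast_nonneg _
      calc ∑ m ∈ Ioc 0 (N / n), ((zeta ^ (s + 1)) m : ℝ)
          ≤ (N / n : ℕ) * (1 + Real.log (N / n : ℕ)) ^ s := ih _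
        _ ≤ (n : ℝ)⁻¹ * N * (1 + Real.log N) ^ s := by gcongr
        _ = (n : ℝ)⁻¹ * (N * (1 + Real.log N) ^ s) := mul_assoc _ _ _
    calc ∑ n ∈ Ioc 0 N, ((zeta ^ (s + 1 + 1)) n : ℝ)
        = ∑ n ∈ Ioc 0 N, ∑ m ∈ Ioc 0 (N / n), ((zeta ^ (s + 1)) m : ℝ) := by
          rw [← Nat.cast_sum, pow_succ', sum_Ioc_mul_eq_sum_sum]
          push_cast
          refine sum_congr rfl fun n hn => ?_
          rw [zeta_apply_ne (mem_Ioc.1 hn).1.ne', Nat.cast_one, one_mul]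
      _ ≤ ∑ n ∈ Ioc 0 N, (n : ℝ)⁻¹ * (N * (1 + Real.log N) ^ s) := sum_le_sum hinner
      _ = (∑ n ∈ Ioc 0 N, (n : ℝ)⁻¹) * (N * (1 + Real.log N) ^ s) := (sum_mul ..).symm
      _ ≤ (1 + Real.log N) * (N * (1 + Real.log N) ^ s) := by
          gcongr; exact sum_Ioc_inv_le_one_add_log N
      _ = N * (1 + Real.log N) ^ (s + 1) := by ring

lemma sum_squarefree_pow_card_primeFactors_le {A : Finset ℕ} {N : ℕ} (hA : A ⊆ Ioc 0 N) (s : ℕ) :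
    ∑ m ∈ A with Squarefree m, (s + 1 : ℝ) ^ #m.primeFactors ≤ N * (1 + Real.log N) ^ s := by
  calc ∑ m ∈ A with Squarefree m, (s + 1 : ℝ) ^ #m.primeFactors
      = ∑ m ∈ A with Squarefree m, ((zeta ^ (s + 1)) m : ℝ) := by
        refine sum_congr rfl fun m hm => ?_
        rw [zeta_pow_apply_of_squarefree _ (mem_filter.1 hm).2]
        push_cast
        rfl
    _ ≤ ∑ m ∈ Ioc 0 N, ((zeta ^ (s + 1)) m : ℝ) :=
        sum_le_sum_of_subset_of_nonneg ((filter_subset _ _).trans hA) fun m _ _ => Nat.cast_nonneg _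
    _ ≤ N * (1 + Real.log N) ^ s := sum_Ioc_zeta_pow_le s N

end DivisorFunction

/-- The finite set of primes dividing `n`, as elements of the subtype `Nat.Primes` by which the
independent values of a random multiplicative function are indexed. -/
def primeDivisors (n : ℕ) : Finset Nat.Primes := n.primeFactors.subtype Nat.Prime

lemma prod_primeDivisors {M : Type*} [CommMonoid M] (g : ℕ → M) (n : ℕ) :
    ∏ p ∈ primeDivisors n, g p = ∏ p ∈ n.primeFactors, g p :=
  prod_subtype_of_mem g fun _ => Nat.prime_of_mem_primeFactors

lemma card_primeDivisors (n : ℕ) : #(primeDivisors n) = #n.primeFactors :=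
  (card_subtype Nat.Prime n.primeFactors).trans <| congrArg card <|
    filter_true_of_mem fun _ => Nat.prime_of_mem_primeFactors

lemma injOn_primeDivisors : Set.InjOn primeDivisors {n | Squarefree n} := by
  intro m hm n hn hmn
  rw [← Nat.prod_primeFactors_of_squarefree hm, ← Nat.prod_primeFactors_of_squarefree hn,
    ← prod_primeDivisors, ← prod_primeDivisors, hmn]

namespace IsRademacherRMF

variable {Ω : Type*} [MeasurableSpace Ω] {μ : Measure Ω} {f : Ω → ℕ → ℝ}

lemma isProbabilityMeasure (hf : IsRademacherRMF μ f) : IsProbabilityMeasure μ :=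
  hf.indep.isProbabilityMeasure

lemma ae_eq_one_or_eq_neg_one (hf : IsRademacherRMF μ f) {p : ℕ} (hp : p.Prime) :
    ∀ᵐ ω ∂μ, f ω p = 1 ∨ f ω p = -1 := by
  have := hf.isProbabilityMeasure
  have hpos : MeasurableSet {ω | f ω p = 1} := hf.meas p (measurableSet_singleton 1)
  have hneg : MeasurableSet {ω | f ω p = -1} := hf.meas p (measurableSet_singleton (-1))
  have hdisj : Disjoint {ω | f ω p = 1} {ω | f ω p = -1} :=
    Set.disjoint_left.2 fun ω (h : f ω p = 1) (h' : f ω p = -1) => by norm_num [h] at h'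
  refine (mem_ae_iff_prob_eq_one (hpos.union hneg)).2 ?_
  rw [measure_union hdisj hneg, hf.prob_one p hp, hf.prob_neg_one p hp, ENNReal.add_halves]

lemma integral_prime_eq_zero (hf : IsRademacherRMF μ f) {p : ℕ} (hp : p.Prime) :
    ∫ ω, f ω p ∂μ = 0 := by
  have := hf.isProbabilityMeasure
  have hpos : MeasurableSet {ω | f ω p = 1} := hf.meas p (measurableSet_singleton 1)
  have hneg : MeasurableSet {ω | f ω p = -1} := hf.meas p (measurableSet_singleton (-1))
  have hindicator : (fun ω => f ω p) =ᵐ[μ] fun ω =>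
      {ω | f ω p = 1}.indicator (fun _ => (1 : ℝ)) ω -
        {ω | f ω p = -1}.indicator (fun _ => (1 : ℝ)) ω := by
    filter_upwards [hf.ae_eq_one_or_eq_neg_one hp] with ω hω
    rcases hω with hω | hω <;> norm_num [Set.indicator, hω]
  rw [integral_congr_ae hindicator, integral_sub ((integrable_const _).indicator hpos)
    ((integrable_const _).indicator hneg), integral_indicator_const _ hpos,
    integral_indicator_const _ hneg, measureReal_def, measureReal_def, hf.prob_one p hp,
    hf.prob_neg_one p hp, sub_self]

lemma isRandomSign (hf : IsRademacherRMF μ f) (p : Nat.Primes) :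
    IsRandomSign μ (fun ω => f ω p) where
  measurable := hf.meas p
  eq_one_or_eq_neg_one := hf.ae_eq_one_or_eq_neg_one p.2
  integral_eq_zero := hf.integral_prime_eq_zero p.2

lemma sum_eq_walshPoly (hf : IsRademacherRMF μ f) (A : Finset ℕ) (ω : Ω) :
    ∑ m ∈ A, f ω m =
      walshPoly ((A.filter Squarefree).image primeDivisors) 1 (fun p => f ω p) := by
  rw [walshPoly, sum_image (injOn_primeDivisors.mono (by simp)), sum_filter]
  refine sum_congr rfl fun m _ => ?_
  split_ifs with hm
  · rw [Pi.one_apply, one_mul, prod_primeDivisors (f ω), hf.eq_prod_of_squarefree ω m hm]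
  · exact hf.eq_zero_of_not_squarefree ω m hm

lemma memLp_sum (hf : IsRademacherRMF μ f) (A : Finset ℕ) (p : ENNReal) :
    MemLp (fun ω => ∑ m ∈ A, f ω m) p μ := by
  have := hf.isProbabilityMeasure
  simpa only [hf.sum_eq_walshPoly A] using memLp_walshPoly hf.isRandomSign _ _ p

lemma integral_sum_pow_le (hf : IsRademacherRMF μ f) (A : Finset ℕ) {k : ℕ} (hk : k ≠ 0) :
    ∫ ω, (∑ m ∈ A, f ω m) ^ (2 * k) ∂μ ≤
      (∑ m ∈ A with Squarefree m, (2 * k - 1 : ℝ) ^ #m.primeFactors) ^ k := by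
  have h := integral_walshPoly_pow_le hf.isRandomSign hf.indep hk
    ((A.filter Squarefree).image primeDivisors) 1
  rw [sum_image (injOn_primeDivisors.mono (by simp))] at h
  simpa only [hf.sum_eq_walshPoly A, Pi.one_apply, one_pow, one_mul, card_primeDivisors] using h

lemma integral_sum_sq_le_card (hf : IsRademacherRMF μ f) (A : Finset ℕ) :
    ∫ ω, (∑ m ∈ A, f ω m) ^ 2 ∂μ ≤ #A := by
  calc ∫ ω, (∑ m ∈ A, f ω m) ^ 2 ∂μ
      ≤ #{m ∈ A | Squarefree m} := by
        simpa [show (2 : ℝ) - 1 = 1 by norm_num] using hf.integral_sum_pow_le A one_ne_zero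
    _ ≤ #A := by exact_mod_cast card_filter_le _ _

lemma integral_sum_pow_le_of_subset_Ioc (hf : IsRademacherRMF μ f) {A : Finset ℕ} {N : ℕ}
    (hA : A ⊆ Ioc 0 N) (n : ℕ) :
    ∫ ω, (∑ m ∈ A, f ω m) ^ (2 * (n + 1)) ∂μ ≤ (N * (1 + Real.log N) ^ (2 * n)) ^ (n + 1) := by
  have hbase : (2 * (n + 1 : ℕ) - 1 : ℝ) = (2 * n : ℕ) + 1 := by push_cast; ring
  have h := hf.integral_sum_pow_le A n.succ_ne_zero
  rw [hbase] at h
  exact h.trans <| pow_le_pow_left₀ (sum_nonneg fun m _ => by positivity)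
    (sum_squarefree_pow_card_primeFactors_le hA (2 * n)) _

lemma sq_integral_abs_sum_pow_le (hf : IsRademacherRMF μ f) {A : Finset ℕ} {N : ℕ}
    (hA : A ⊆ Ioc 0 N) (n : ℕ) :
    (∫ ω, |∑ m ∈ A, f ω m| ^ (2 * (n + 1)) ∂μ) ^ 2 ≤
      #A * (N * (1 + Real.log N) ^ (4 * n)) ^ (2 * n + 1) := by
  have hpow : MemLp (fun ω => (∑ m ∈ A, f ω m) ^ (2 * n + 1)) 2 μ := by
    refine (memLp_two_iff_integrable_sq ((hf.memLp_sum A 1).1.pow _)).2 ?_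
    simpa only [Pi.pow_apply, ← pow_mul] using
      integrable_pow_of_memLp (n := (2 * n + 1) * 2) (by positivity) (hf.memLp_sum A _)
  calc (∫ ω, |∑ m ∈ A, f ω m| ^ (2 * (n + 1)) ∂μ) ^ 2
      = (∫ ω, |∑ m ∈ A, f ω m| * |(∑ m ∈ A, f ω m) ^ (2 * n + 1)| ∂μ) ^ 2 := by
        simp only [abs_pow, ← pow_succ']
        rfl
    _ ≤ (∫ ω, (∑ m ∈ A, f ω m) ^ 2 ∂μ) * ∫ ω, ((∑ m ∈ A, f ω m) ^ (2 * n + 1)) ^ 2 ∂μ :=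
        sq_integral_abs_mul_abs_le (hf.memLp_sum A 2) hpow
    _ ≤ #A * (N * (1 + Real.log N) ^ (4 * n)) ^ (2 * n + 1) := by
        refine mul_le_mul (hf.integral_sum_sq_le_card A) ?_
          (integral_nonneg fun ω => sq_nonneg _) (Nat.cast_nonneg _)
        have h := hf.integral_sum_pow_le_of_subset_Ioc hA (2 * n)
        rw [show 2 * (2 * n) = 4 * n by ring] at h
        simpa only [← pow_mul, mul_comm _ 2] using h

lemma integral_abs_sum_pow_le (hf : IsRademacherRMF μ f) {A : Finset ℕ} {N : ℕ}
    (hA : A ⊆ Ioc 0 N) (n : ℕ) :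
    ∫ ω, |∑ m ∈ A, f ω m| ^ (2 * (n + 1)) ∂μ ≤
      √(#A * N ^ (2 * n + 1)) * (1 + Real.log N) ^ (2 * n * (2 * n + 1)) := by
  have : 0 ≤ Real.log N := Real.log_natCast_nonneg N
  refine le_of_sq_le_sq ((hf.sq_integral_abs_sum_pow_le hA n).trans_eq ?_) (by positivity)
  rw [mul_pow (√_), Real.sq_sqrt (by positivity)]
  ring

end IsRademacherRMF

section ShortInterval

lemma card_Ioc_floor_le {z y : ℝ} (hy : 0 ≤ y) (hzy : z ≤ y) :
    (#(Ioc ⌊z⌋₊ ⌊y⌋₊) : ℝ) ≤ y - z + 1 := by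
  rw [Nat.card_Ioc, Nat.cast_sub (Nat.floor_mono hzy)]
  linarith [Nat.floor_le hy, Nat.lt_floor_add_one z]

lemma card_Ioc_floor_div_le {x X p t : ℝ} (hX : 0 < X) (hp : 0 < p) (hpx : p ≤ x / (X + 1))
    (hpt : p ≤ t) (htX : t ≤ p * (1 + 1 / X)) :
    (#(Ioc ⌊x / t⌋₊ ⌊x / p⌋₊) : ℝ) ≤ 2 * (x / p) / X := by
  have hXy : X + 1 ≤ x / p := (le_div_comm₀ hp (by positivity)).1 hpx
  have hy : 0 < x / p := by linarith
  have hx : 0 < x := (div_pos_iff_of_pos_right hp).1 hy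
  have hlower : x / p - x / p / (X + 1) ≤ x / t := by
    calc x / p - x / p / (X + 1) = x / (p * (1 + 1 / X)) := by field_simp; ring
      _ ≤ x / t := by gcongr; exact hp.trans_le hpt
  calc (#(Ioc ⌊x / t⌋₊ ⌊x / p⌋₊) : ℝ)
      ≤ x / p - x / t + 1 := card_Ioc_floor_le hy.le (by gcongr)
    _ ≤ x / p / (X + 1) + x / p / (X + 1) := by
        linarith [(one_le_div₀ (show 0 < X + 1 by positivity)).2 hXy]
    _ = 2 * (x / p) / (X + 1) := by ring
    _ ≤ 2 * (x / p) / X := by gcongr; linarith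

lemma one_add_log_floor_le {x y : ℝ} (hx : 2 ≤ x) (hy : 1 ≤ y) (hyx : y ≤ x) :
    1 + Real.log ⌊y⌋₊ ≤ 3 * Real.log x := by
  have hfloor : Real.log ⌊y⌋₊ ≤ Real.log x :=
    Real.log_le_log (by exact_mod_cast Nat.floor_pos.2 hy)
      ((Nat.floor_le (by positivity)).trans hyx)
  linarith [Real.log_le_log two_pos hx, Real.log_two_gt_d9]

lemma sqrt_two_mul_div_mul_pow {y X : ℝ} (hy : 0 ≤ y) (hX : 0 ≤ X) (n : ℕ) :
    √(2 * y / X * y ^ (2 * n + 1)) = √2 * y ^ (n + 1) * X ^ (-(1 / 2) : ℝ) := by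
  rw [show 2 * y / X * y ^ (2 * n + 1) = 2 * (y ^ (n + 1)) ^ 2 * X⁻¹ by ring,
    Real.sqrt_mul (by positivity), Real.sqrt_mul zero_le_two, Real.sqrt_sq (by positivity),
    Real.sqrt_inv, Real.rpow_neg hX, Real.sqrt_eq_rpow X]

end ShortInterval

theorem short_interval_moment_rademacher_general {Ω : Type*} [MeasurableSpace Ω] {μ : Measure Ω}
    {f : Ω → ℕ → ℝ} (hf : IsRademacherRMF μ f) {q : ℕ} (hq : 1 ≤ q) :
    ∃ C : ℝ, 0 < C ∧ ∀ x X p t : ℝ, 2 ≤ x → 0 < X → 1 ≤ p → p ≤ x / (X + 1) → p ≤ t →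
      t ≤ p * (1 + 1 / X) →
      ∫ ω, |∑ m ∈ Ioc ⌊x / t⌋₊ ⌊x / p⌋₊, f ω m| ^ (2 * q) ∂μ ≤
        C * (x / p) ^ q * Real.log x ^ (4 * (q : ℝ) ^ 2 - 6 * q + 2) * X ^ (-(1 / 2) : ℝ) := by
  obtain ⟨n, rfl⟩ := Nat.exists_eq_add_of_le' hq
  refine ⟨√2 * 3 ^ (2 * n * (2 * n + 1)), by positivity, fun x X p t hx hX hp hpx hpt htX => ?_⟩
  have hp0 : 0 < p := one_pos.trans_le hp
  have hy : 1 ≤ x / p := by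
    linarith [(le_div_comm₀ hp0 (by positivity)).1 hpx]
  have hlog := one_add_log_floor_le hx hy (div_le_self (by linarith) hp)
  have : 0 ≤ Real.log ⌊x / p⌋₊ := Real.log_natCast_nonneg _
  have hexp : 4 * ((n + 1 : ℕ) : ℝ) ^ 2 - 6 * (n + 1 : ℕ) + 2 = (2 * n * (2 * n + 1) : ℕ) := by
    push_cast; ring
  calc ∫ ω, |∑ m ∈ Ioc ⌊x / t⌋₊ ⌊x / p⌋₊, f ω m| ^ (2 * (n + 1)) ∂μ
      ≤ √(#(Ioc ⌊x / t⌋₊ ⌊x / p⌋₊) * ⌊x / p⌋₊ ^ (2 * n + 1)) *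
          (1 + Real.log ⌊x / p⌋₊) ^ (2 * n * (2 * n + 1)) :=
        hf.integral_abs_sum_pow_le (Ioc_subset_Ioc_left (Nat.zero_le _)) n
    _ ≤ √(2 * (x / p) / X * (x / p) ^ (2 * n + 1)) *
          (3 * Real.log x) ^ (2 * n * (2 * n + 1)) := by
        gcongr
        · exact card_Ioc_floor_div_le hX hp0 hpx hpt htX
        · exact Nat.floor_le (by positivity)
    _ = √2 * 3 ^ (2 * n * (2 * n + 1)) * (x / p) ^ (n + 1) *
          Real.log x ^ (4 * ((n + 1 : ℕ) : ℝ) ^ 2 - 6 * (n + 1 : ℕ) + 2) *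
          X ^ (-(1 / 2) : ℝ) := by
        rw [sqrt_two_mul_div_mul_pow (by positivity) hX.le, hexp, Real.rpow_natCast, mul_pow]
        ring

/-- `E[|∑_{x/t < m ≤ x/p} f(m)|^{2q}] ≪_q (x/p)^q (log x)^{4q²-6q+2} X^{-1/2}`. -/
theorem short_interval_moment_rademacher
    {Ω : Type*} [MeasurableSpace Ω] (μ : Measure Ω) [IsProbabilityMeasure μ]
    (f : Ω → ℕ → ℝ) (hf : IsRademacherRMF μ f) (q : ℕ) (hq : 1 ≤ q) :
    ∃ C : ℝ, 0 < C ∧ ∀ x X : ℝ, 2 ≤ x → 1 ≤ X → ∀ p : ℕ, p.Prime →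
      Real.sqrt x < (p : ℝ) → (p : ℝ) ≤ x / (X + 1) →
      ∀ t : ℝ, (p : ℝ) ≤ t → t ≤ (p : ℝ) * (1 + 1 / X) →
      ∫ ω, |∑ m ∈ Finset.Ioc ⌊x / t⌋₊ ⌊x / (p : ℝ)⌋₊, f ω m| ^ (2 * q) ∂μ ≤
        C * (x / (p : ℝ)) ^ q *
          Real.log x ^ (4 * (q : ℝ) ^ 2 - 6 * (q : ℝ) + 2) * X ^ (-(1 / 2 : ℝ)) := by
  obtain ⟨C, hC, hbound⟩ := short_interval_moment_rademacher_general hf hq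
  exact ⟨C, hC, fun x X hx hX p hp _ hpx t => hbound x X p t hx (one_pos.trans_le hX)
    (by exact_mod_cast hp.one_le) hpx⟩
end
end
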